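/- arXiv:1710.01427 — 7 statements merged into one kernel-verified Lean document; each statement's English description precedes it below -/
import Mathlib

section
/- Let n ≥ 1, α = √((n+1)/n), β = 1/(n+1), γ = (1/n)(1 ± √β), V = α(I − γ·e·eᵀ) ∈ ℝ^{n×n}, and let V₊ = [V, −V·e] ∈ ℝ^{n×(n+1)} be V augmented with the extra column v_{n+1} = −V·e. Then the n+1 columns v₁, …, v_{n+1} of V₊ form a minimal positive basis of ℝⁿ with uniform angles; that is: (i) every x ∈ ℝⁿ can be written as a nonnegative linear combination of v₁, …, v_{n+1}; and (ii) V₊ᵀV₊ ∈ ℝ^{(n+1)×(n+1)} has every diagonal entry equal to 1 and every off-diagonal entry equal to −1/n (so each column has unit Euclidean norm and vᵢᵀvⱼ = −1/n for all i ≠ j). -/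
open Matrix

/-!
Only the Gram matrix of `V` matters: `α` and `γ` are tuned so that `Vᵀ V` already has unit diagonal
and off-diagonal entries `-c` with `c = 1 / n`. Since `n c = 1`, the all-ones vector `e` is an
eigenvector of `Vᵀ V` for the eigenvalue `c`, so the extra column `-V e` has product `-c` with each
`vᵢ` and squared norm `n c = 1`. It also gives `Vᵀ V (I + e eᵀ) = (1 + c) I`, so `V` is
surjective, and `x = V y` becomes a nonnegative combination upon adding a large multiple of
`V e + (-V e) = 0`.
-/

section AppendNegSum

variable {R m : Type*} {n : ℕ}

/-- The matrix `[V, -V e]`, for `e` the all-ones vector: the columns of `V` followed by the negative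
of their sum. -/
def appendNegSum [NonAssocRing R] (V : Matrix m (Fin n) R) : Matrix m (Fin (n + 1)) R :=
  of fun i => Fin.snoc (V i) (-(V *ᵥ 1) i)

@[simp]
lemma appendNegSum_castSucc [NonAssocRing R] (V : Matrix m (Fin n) R) (i : m) (j : Fin n) :
    appendNegSum V i j.castSucc = V i j := by
  simp [appendNegSum]

@[simp]
lemma appendNegSum_last [NonAssocRing R] (V : Matrix m (Fin n) R) (i : m) :
    appendNegSum V i (Fin.last n) = -(V *ᵥ 1) i := by
  simp [appendNegSum]

lemma appendNegSum_mulVec_snoc [NonAssocRing R] (V : Matrix m (Fin n) R) (y : Fin n → R) (t : R) :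
    appendNegSum V *ᵥ (Fin.snoc y t : Fin (n + 1) → R) = V *ᵥ fun j => y j - t := by
  ext i
  simp only [mulVec, dotProduct, Fin.sum_univ_castSucc, appendNegSum_castSucc, appendNegSum_last,
    Fin.snoc_castSucc, Fin.snoc_last, Pi.one_apply, mul_one, neg_mul, Finset.sum_mul, mul_sub,
    Finset.sum_sub_distrib, sub_eq_add_neg (∑ j, V i j * y j)]

theorem exists_nonneg_appendNegSum_mulVec_eq [NonAssocRing R] [LinearOrder R]
    [IsOrderedAddMonoid R] {V : Matrix m (Fin n) R} (hV : Function.Surjective V.mulVec)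
    (x : m → R) : ∃ c : Fin (n + 1) → R, (∀ j, 0 ≤ c j) ∧ x = appendNegSum V *ᵥ c := by
  obtain ⟨y, rfl⟩ := hV x
  obtain ⟨t, ht⟩ := Finite.exists_le (-y)
  refine ⟨Fin.snoc (fun j => y j + max t 0) (max t 0), fun j => ?_, ?_⟩
  · cases j using Fin.lastCases with
    | last => simp
    | cast j => simpa using neg_le_iff_add_nonneg'.mp ((ht j).trans (le_max_left t 0))
  · simp [appendNegSum_mulVec_snoc]

end AppendNegSum

section EquiangularGram

variable {R ι m : Type*} [DecidableEq ι] {c : R} {n : ℕ}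

/-- The Gram matrix of a family, indexed by `ι`, of unit vectors with uniform angles: any two
distinct vectors have inner product `-c`. -/
def equiangularGram {R : Type*} [One R] [Neg R] (ι : Type*) [DecidableEq ι] (c : R) :
    Matrix ι ι R :=
  of fun i j => if i = j then 1 else -c

@[simp]
lemma equiangularGram_apply_self [One R] [Neg R] (c : R) (i : ι) : equiangularGram ι c i i = 1 := by
  simp [equiangularGram]

lemma equiangularGram_apply_of_ne [One R] [Neg R] (c : R) {i j : ι} (hij : i ≠ j) :
    equiangularGram ι c i j = -c := by
  simp [equiangularGram, hij]

variable [CommRing R]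

lemma equiangularGram_eq_smul_one_sub_smul_vecMulVec (c : R) :
    equiangularGram ι c = (1 + c) • (1 : Matrix ι ι R) - c • vecMulVec 1 1 := by
  ext i j
  by_cases h : i = j <;> simp [equiangularGram, h, one_apply]

variable [Fintype ι]

lemma equiangularGram_mulVec_one (hc : Fintype.card ι * c = 1) :
    equiangularGram ι c *ᵥ 1 = c • 1 := by
  have hc' : c * Fintype.card ι = 1 := by rw [mul_comm, hc]
  rw [equiangularGram_eq_smul_one_sub_smul_vecMulVec, sub_mulVec, smul_mulVec, smul_mulVec,
    one_mulVec, vecMulVec_mulVec, one_dotProduct_one]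
  ext i
  simp [hc']

lemma isUnit_equiangularGram (hc : Fintype.card ι * c = 1) (hunit : IsUnit (1 + c)) :
    IsUnit (equiangularGram ι c) := by
  have hmul : equiangularGram ι c * (1 + vecMulVec 1 1) = (1 + c) • 1 := by
    rw [mul_add, mul_one, mul_vecMulVec, equiangularGram_mulVec_one hc, smul_vecMulVec,
      equiangularGram_eq_smul_one_sub_smul_vecMulVec, sub_add_cancel]
  refine isUnit_of_mul_isUnit_left (y := 1 + vecMulVec 1 1) ?_
  rw [hmul]
  exact isUnit_one.smul hunit.unit

lemma mulVec_surjective_of_isUnit_transpose_mul_self {V : Matrix ι ι R} (hV : IsUnit (Vᵀ * V)) :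
    Function.Surjective V.mulVec :=
  mulVec_surjective_iff_isUnit.mpr (isUnit_of_mul_isUnit_right hV)

theorem appendNegSum_transpose_mul_self [Fintype m] {V : Matrix m (Fin n) R} (hc : n * c = 1)
    (hV : Vᵀ * V = equiangularGram (Fin n) c) :
    (appendNegSum V)ᵀ * appendNegSum V = equiangularGram (Fin (n + 1)) c := by
  have hVe : Vᵀ *ᵥ (V *ᵥ 1) = c • 1 := by
    rw [mulVec_mulVec, hV, equiangularGram_mulVec_one (by simpa using hc)]
  have hcol (i : Fin n) : ∑ k, V k i * (V *ᵥ 1) k = c := by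
    simpa [mulVec, dotProduct] using congrFun hVe i
  have hnorm : ∑ k, (V *ᵥ 1) k * (V *ᵥ 1) k = 1 := by
    calc (V *ᵥ 1) ⬝ᵥ (V *ᵥ 1) = 1 ⬝ᵥ Vᵀ *ᵥ (V *ᵥ 1) := by
          rw [mulVec_transpose, dotProduct_comm 1, ← dotProduct_mulVec]
      _ = 1 := by simp [hVe, hc, mul_comm c]
  ext i j
  rw [mul_apply]
  cases i using Fin.lastCases with
  | last =>
    cases j using Fin.lastCases with
    | last => simp [hnorm]
    | cast j =>
      simp [equiangularGram_apply_of_ne c (Fin.castSucc_ne_last j).symm, hcol, mul_comm _ (V _ j)]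
  | cast i =>
    cases j using Fin.lastCases with
    | last => simp [equiangularGram_apply_of_ne c (Fin.castSucc_ne_last i), hcol]
    | cast j => simpa [mul_apply, equiangularGram] using congrFun₂ hV i j

end EquiangularGram

lemma one_sub_smul_vecMulVec_transpose_mul_self {R ι : Type*} [CommRing R] [Fintype ι]
    [DecidableEq ι] (γ : R) (e : ι → R) :
    (1 - γ • vecMulVec e e)ᵀ * (1 - γ • vecMulVec e e) =
      1 - (γ * (2 - γ * (e ⬝ᵥ e))) • vecMulVec e e := by
  simp only [transpose_sub, transpose_one, transpose_smul, transpose_vecMulVec, mul_sub, sub_mul,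
    mul_one, one_mul, Matrix.smul_mul, Matrix.mul_smul, vecMulVec_mul_vecMulVec, vecMulVec_smul]
  module

lemma smul_one_sub_smul_vecMulVec_transpose_mul_self {K ι : Type*} [Field K] [CharZero K]
    [Fintype ι] [Nonempty ι] [DecidableEq ι] {α γ : K}
    (hα : α ^ 2 = (Fintype.card ι + 1) / Fintype.card ι)
    (hγ : (1 - Fintype.card ι * γ) ^ 2 = 1 / (Fintype.card ι + 1)) :
    (α • (1 - γ • vecMulVec 1 1 : Matrix ι ι K))ᵀ * (α • (1 - γ • vecMulVec 1 1)) =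
      equiangularGram ι (1 / Fintype.card ι : K) := by
  have hcard : (Fintype.card ι : K) ≠ 0 := by simp
  have hcard' : (Fintype.card ι : K) + 1 ≠ 0 := Nat.cast_add_one_ne_zero _
  have hcoeff : γ * (2 - γ * Fintype.card ι) = 1 / (Fintype.card ι + 1) := by
    apply mul_left_cancel₀ hcard
    calc Fintype.card ι * (γ * (2 - γ * Fintype.card ι))
        = 1 - (1 - Fintype.card ι * γ) ^ 2 := by ring
      _ = Fintype.card ι * (1 / (Fintype.card ι + 1)) := by rw [hγ]; field_simp; ring
  rw [transpose_smul, Matrix.smul_mul, Matrix.mul_smul, smul_smul, ← sq, hα,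
    one_sub_smul_vecMulVec_transpose_mul_self, one_dotProduct_one, hcoeff,
    equiangularGram_eq_smul_one_sub_smul_vecMulVec, smul_sub, smul_smul]
  congr 2 <;> field_simp

lemma one_sub_mul_sq_of_eq_or_eq {K : Type*} [Field K] {a γ s : K} (ha : a ≠ 0)
    (hγ : γ = (1 / a) * (1 - s) ∨ γ = (1 / a) * (1 + s)) : (1 - a * γ) ^ 2 = s ^ 2 := by
  rcases hγ with rfl | rfl <;> field_simp <;> ring

theorem stmt_5_general {K : Type*} [Field K] [LinearOrder K] [IsStrictOrderedRing K]
    (n : ℕ) (hn : 1 ≤ n) (α γ : K) (hα : α ^ 2 = (n + 1) / n)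
    (hγ : (1 - n * γ) ^ 2 = 1 / (n + 1))
    (V : Matrix (Fin n) (Fin n) K) (hV : V = α • (1 - γ • vecMulVec 1 1))
    (Vp : Matrix (Fin n) (Fin (n + 1)) K)
    (hVp : ∀ (i : Fin n) (j : Fin (n + 1)),
      Vp i j = if hj : (j : ℕ) < n then V i ⟨j, hj⟩ else -(V.mulVec 1 i)) :
    (∀ x : Fin n → K, ∃ c : Fin (n + 1) → K, (∀ j, 0 ≤ c j) ∧ x = Vp.mulVec c) ∧
    (∀ j, (Vpᵀ * Vp) j j = 1) ∧
    (∀ i j, i ≠ j → (Vpᵀ * Vp) i j = -1 / n) := by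
  have : NeZero n := ⟨by lia⟩
  have hc : (n : K) * (1 / n) = 1 := by simp
  have hVp_eq : Vp = appendNegSum V := Matrix.ext hVp
  have hgram : Vᵀ * V = equiangularGram (Fin n) (1 / n : K) := by
    simpa only [hV, Fintype.card_fin] using smul_one_sub_smul_vecMulVec_transpose_mul_self
      (ι := Fin n) (by simpa only [Fintype.card_fin] using hα)
      (by simpa only [Fintype.card_fin] using hγ)
  have hsurj : Function.Surjective V.mulVec := by
    apply mulVec_surjective_of_isUnit_transpose_mul_self
    rw [hgram]
    exact isUnit_equiangularGram (by simp) (IsUnit.mk0 _ (by positivity))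
  rw [hVp_eq, appendNegSum_transpose_mul_self hc hgram]
  exact ⟨exists_nonneg_appendNegSum_mulVec_eq hsurj, equiangularGram_apply_self _,
    fun i j hij => by rw [equiangularGram_apply_of_ne _ hij, neg_div]⟩

/-- The columns of `V₊ = [V, −Ve]` form a minimal positive basis
of ℝⁿ with uniform angles: (i) every `x ∈ ℝⁿ` is a nonnegative combination of
the `n+1` columns, and (ii) `V₊ᵀV₊` has unit diagonal and off-diagonal entries
`−1/n`. -/
theorem stmt_5 (n : ℕ) (hn : 1 ≤ n)
    (α β γ : ℝ)
    (hα : α = Real.sqrt ((n + 1) / n))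
    (hβ : β = 1 / (n + 1))
    (hγ : γ = (1 / n) * (1 - Real.sqrt β) ∨ γ = (1 / n) * (1 + Real.sqrt β))
    (e : Fin n → ℝ) (he : e = fun _ => 1)
    (V : Matrix (Fin n) (Fin n) ℝ)
    (hV : V = α • ((1 : Matrix (Fin n) (Fin n) ℝ) - γ • Matrix.vecMulVec e e))
    (Vp : Matrix (Fin n) (Fin (n + 1)) ℝ)
    (hVp : ∀ (i : Fin n) (j : Fin (n + 1)),
      Vp i j = if hj : (j : ℕ) < n then V i ⟨j, hj⟩ else -(V.mulVec e i)) :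
    (∀ x : Fin n → ℝ, ∃ c : Fin (n + 1) → ℝ, (∀ j, 0 ≤ c j) ∧ x = Vp.mulVec c) ∧
    (∀ j, (Vpᵀ * Vp) j j = 1) ∧
    (∀ i j, i ≠ j → (Vpᵀ * Vp) i j = -1 / n) := by
  have hn0 : (n : ℝ) ≠ 0 := by positivity
  have hs : Real.sqrt β ^ 2 = 1 / (n + 1) := by rw [Real.sq_sqrt (by rw [hβ]; positivity), hβ]
  subst he
  exact stmt_5_general n hn α γ (by rw [hα, Real.sq_sqrt (by positivity)])
    ((one_sub_mul_sq_of_eq_or_eq hn0 hγ).trans hs) V hV Vp hVp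
end

section
/- Let n ≥ 1, let V ∈ ℝ^{n×n} be any matrix, let e denote an all-ones vector of appropriate size, and let V₊ = [V, −V·e] ∈ ℝ^{n×(n+1)}. For any scalars f₀, f₁, …, f_{n+1} ∈ ℝ, writing f = (f₁, …, fₙ)ᵀ ∈ ℝⁿ and δf₊ = (f₁ − f₀, …, f_{n+1} − f₀)ᵀ ∈ ℝ^{n+1}, one has V₊·δf₊ = V·(f − f_{n+1}·e). Consequently, any solution g of the normal equations V₊V₊ᵀ·g = (1/h)·V₊·δf₊ (for h > 0) is independent of the value f₀. -/
open Matrix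

/-! The columns of `V₊` sum to zero, so `V₊` annihilates constant vectors. The shift of all
function values by `f₀` is therefore invisible in `V₊ δf₊`; shifting by `f_{n+1}` instead makes
the last entry vanish and leaves only the block `V`. -/

section

variable {R m : Type*} [NonAssocRing R] {n : ℕ}

/-- The matrix `V₊ = [V, -Ve]`, whose columns are the arms from the centroid of a simplex to all
`n + 1` of its vertices when the columns of `V` are the arms to the first `n`. -/
def snocNegRowSum (V : Matrix m (Fin n) R) : Matrix m (Fin (n + 1)) R :=
  of fun i => Fin.snoc (V i) (-(V *ᵥ 1) i)

theorem snocNegRowSum_mulVec_snoc (V : Matrix m (Fin n) R) (v : Fin n → R) (c : R) :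
    snocNegRowSum V *ᵥ Fin.snoc v c = V *ᵥ (v - c • 1) := by
  ext i
  calc (snocNegRowSum V *ᵥ Fin.snoc v c) i
      = ∑ j, V i j * v j + -(∑ j, V i j) * c := by
        simp [snocNegRowSum, mulVec, dotProduct, Fin.sum_univ_castSucc]
    _ = ∑ j, V i j * (v j - c) := by
        simp only [neg_mul, Finset.sum_mul, ← sub_eq_add_neg, mul_sub, Finset.sum_sub_distrib]
    _ = (V *ᵥ (v - c • 1)) i := by simp [mulVec, dotProduct]

theorem snocNegRowSum_mulVec_const (V : Matrix m (Fin n) R) (c : R) :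
    snocNegRowSum V *ᵥ Function.const _ c = 0 := by
  have snoc_const : Fin.snoc (c • 1 : Fin n → R) c = Function.const (Fin (n + 1)) c := by
    ext j
    cases j using Fin.lastCases <;> simp
  rw [← snoc_const, snocNegRowSum_mulVec_snoc, sub_self, mulVec_zero]

theorem snocNegRowSum_mulVec_snoc_sub_const (V : Matrix m (Fin n) R) (v : Fin n → R) (c b : R) :
    snocNegRowSum V *ᵥ (Fin.snoc v c - Function.const _ b) = V *ᵥ (v - c • 1) := by
  rw [mulVec_sub, snocNegRowSum_mulVec_const, sub_zero, snocNegRowSum_mulVec_snoc]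

theorem stmt_8_general [Fintype m] (V : Matrix m (Fin n) R) (f : Fin n → R)
    (fnp1 f₀ f₀' a : R) :
    snocNegRowSum V *ᵥ (Fin.snoc f fnp1 - Function.const _ f₀) = V *ᵥ (f - fnp1 • 1) ∧
    ∀ g : m → R,
      (snocNegRowSum V * (snocNegRowSum V)ᵀ) *ᵥ g =
        a • snocNegRowSum V *ᵥ (Fin.snoc f fnp1 - Function.const _ f₀) ↔
      (snocNegRowSum V * (snocNegRowSum V)ᵀ) *ᵥ g =
        a • snocNegRowSum V *ᵥ (Fin.snoc f fnp1 - Function.const _ f₀') := by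
  simp only [snocNegRowSum_mulVec_snoc_sub_const, implies_true, and_self]

end

/-- For any matrix `V` and `V₊ = [V, −Ve]`, one has
`V₊ δf₊ = V (f − f_{n+1} e)`; consequently the solutions of the normal
equations `V₊V₊ᵀ g = (1/h) V₊ δf₊` do not depend on the centroid value `f₀`. -/
theorem stmt_8 (n : ℕ) (hn : 1 ≤ n)
    (V : Matrix (Fin n) (Fin n) ℝ)
    (e : Fin n → ℝ) (he : e = fun _ => 1)
    (Vp : Matrix (Fin n) (Fin (n + 1)) ℝ)
    (hVp : ∀ (i : Fin n) (j : Fin (n + 1)),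
      Vp i j = if hj : (j : ℕ) < n then V i ⟨j, hj⟩ else -(V.mulVec e i))
    (f : Fin n → ℝ) (fnp1 f₀ f₀' : ℝ) (h : ℝ) (hh : 0 < h)
    (δ δ' : Fin (n + 1) → ℝ)
    (hδ : ∀ j : Fin (n + 1),
      δ j = (if hj : (j : ℕ) < n then f ⟨j, hj⟩ else fnp1) - f₀)
    (hδ' : ∀ j : Fin (n + 1),
      δ' j = (if hj : (j : ℕ) < n then f ⟨j, hj⟩ else fnp1) - f₀') :
    Vp.mulVec δ = V.mulVec (f - fnp1 • e) ∧
    (∀ g : Fin n → ℝ,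
      (Vp * Vpᵀ).mulVec g = (1 / h) • Vp.mulVec δ ↔
      (Vp * Vpᵀ).mulVec g = (1 / h) • Vp.mulVec δ') := by
  subst he
  -- `Fin.snoc` unfolds to the case distinctions in `hVp`, `hδ` and `hδ'`.
  rw [show Vp = snocNegRowSum V from Matrix.ext hVp, funext hδ, funext hδ']
  exact stmt_8_general V f fnp1 f₀ f₀' (1 / h)
end

section
/- Let n ≥ 1, α = √((n+1)/n), β = 1/(n+1), γ = (1/n)(1 ± √β), V = α(I − γ·e·eᵀ) ∈ ℝ^{n×n}, and V₊ = [V, −V·e] ∈ ℝ^{n×(n+1)}. Then V₊·V₊ᵀ = α²·I. -/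
open Matrix

/-!
Since `V₊ = V [I, −e]`, one has `V₊V₊ᵀ = V (I + eeᵀ) Vᵀ`, so up to the scaling `α` the claim is
that `I − γ eeᵀ` is an inverse square root of `I + eeᵀ`. As `eeᵀ` squares to `c eeᵀ` with
`c = eᵀe`, this reduces to the quadratic equation `(1 + c) γ (2 − c γ) = 1`, whose roots are
`γ = (1 / c) (1 ± √(1 / (c + 1)))`.
-/

theorem mul_eq_add_vecMulVec_last {R l m : Type*} [NonUnitalNonAssocSemiring R] {n : ℕ}
    (M : Matrix l (Fin (n + 1)) R) (N : Matrix (Fin (n + 1)) m R) :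
    M * N = M.submatrix id Fin.castSucc * N.submatrix Fin.castSucc id +
      vecMulVec (M.col (Fin.last n)) (N.row (Fin.last n)) := by
  ext i k
  exact Fin.sum_univ_castSucc fun j => M i j * N j k

theorem mul_transpose_add_vecMulVec_mulVec {R m ι : Type*} [CommSemiring R] [Fintype ι]
    [DecidableEq ι] (A : Matrix m ι R) (v : ι → R) :
    A * Aᵀ + vecMulVec (A *ᵥ v) (A *ᵥ v) = A * (1 + vecMulVec v v) * Aᵀ := by
  rw [Matrix.mul_add, Matrix.mul_one, Matrix.add_mul, mul_vecMulVec,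
    vecMulVec_mul, vecMul_transpose]

theorem one_sub_smul_mul_one_add_mul_one_sub_smul_eq_one {R A : Type*} [CommRing R] [Ring A]
    [Algebra R A] {P : A} {c γ : R} (hP : P * P = c • P) (hγ : (1 + c) * (γ * (2 - c * γ)) = 1) :
    (1 - γ • P) * (1 + P) * (1 - γ • P) = 1 := by
  have expand : (1 - γ • P) * (1 + P) * (1 - γ • P) =
      1 + (1 - (1 + c) * (γ * (2 - c * γ))) • P := by
    simp only [mul_add, add_mul, mul_sub, sub_mul, mul_one, one_mul, smul_mul_assoc,
      mul_smul_comm, hP]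
    module
  rw [expand, hγ, sub_self, zero_smul, add_zero]

theorem one_add_mul_mul_two_sub_mul_eq_one {c γ : ℝ} (hc : 0 < c)
    (hγ : γ = (1 / c) * (1 - √(1 / (c + 1))) ∨ γ = (1 / c) * (1 + √(1 / (c + 1)))) :
    (1 + c) * (γ * (2 - c * γ)) = 1 := by
  have one_sub_sq : (1 - c * γ) ^ 2 = 1 / (c + 1) := by
    have sqrt_sq : √(1 / (c + 1)) ^ 2 = 1 / (c + 1) := Real.sq_sqrt (by positivity)
    rw [← sqrt_sq, sq_eq_sq_iff_eq_or_eq_neg]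
    refine hγ.imp ?_ ?_ <;> rintro rfl <;> field_simp <;> ring
  have cleared : (1 - c * γ) ^ 2 * (c + 1) = 1 := by
    rw [one_sub_sq, one_div_mul_cancel (by positivity)]
  refine mul_left_cancel₀ hc.ne' ?_
  linear_combination -cleared

theorem stmt_9_general {R : Type*} [CommRing R] {n : ℕ} {α γ : R} {e : Fin n → R}
    (hγ : (1 + e ⬝ᵥ e) * (γ * (2 - (e ⬝ᵥ e) * γ)) = 1)
    {V : Matrix (Fin n) (Fin n) R} (hV : V = α • (1 - γ • vecMulVec e e))
    {Vp : Matrix (Fin n) (Fin (n + 1)) R}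
    (hVp : ∀ (i : Fin n) (j : Fin (n + 1)),
      Vp i j = if hj : (j : ℕ) < n then V i ⟨j, hj⟩ else -((V *ᵥ e) i)) :
    Vp * Vpᵀ = α ^ 2 • (1 : Matrix (Fin n) (Fin n) R) := by
  have init_cols : Vp.submatrix id Fin.castSucc = V := by ext; simp [hVp]
  have last_col : Vp.col (Fin.last n) = -(V *ᵥ e) := by ext; simp [hVp]
  have rank_one_sq : vecMulVec e e * vecMulVec e e = (e ⬝ᵥ e) • vecMulVec e e := by
    rw [vecMulVec_mul_vecMulVec, vecMulVec_smul]
  calc Vp * Vpᵀ = V * Vᵀ + vecMulVec (V *ᵥ e) (V *ᵥ e) := by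
        rw [mul_eq_add_vecMulVec_last, ← transpose_submatrix, row_transpose, init_cols, last_col,
          neg_vecMulVec, vecMulVec_neg, neg_neg]
    _ = V * (1 + vecMulVec e e) * Vᵀ := mul_transpose_add_vecMulVec_mulVec V e
    _ = α ^ 2 • ((1 - γ • vecMulVec e e) * (1 + vecMulVec e e) * (1 - γ • vecMulVec e e)) := by
        simp only [hV, transpose_smul, transpose_sub, transpose_one, transpose_vecMulVec,
          smul_mul_assoc, mul_smul_comm, smul_smul, sq]
    _ = α ^ 2 • 1 := by rw [one_sub_smul_mul_one_add_mul_one_sub_smul_eq_one rank_one_sq hγ]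

/-- For the aligned positive basis `V₊ = [V, −Ve]` one has
`V₊V₊ᵀ = α² I`. -/
theorem stmt_9 (n : ℕ) (hn : 1 ≤ n)
    (α β γ : ℝ)
    (hα : α = Real.sqrt ((n + 1) / n))
    (hβ : β = 1 / (n + 1))
    (hγ : γ = (1 / n) * (1 - Real.sqrt β) ∨ γ = (1 / n) * (1 + Real.sqrt β))
    (e : Fin n → ℝ) (he : e = fun _ => 1)
    (V : Matrix (Fin n) (Fin n) ℝ)
    (hV : V = α • ((1 : Matrix (Fin n) (Fin n) ℝ) - γ • Matrix.vecMulVec e e))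
    (Vp : Matrix (Fin n) (Fin (n + 1)) ℝ)
    (hVp : ∀ (i : Fin n) (j : Fin (n + 1)),
      Vp i j = if hj : (j : ℕ) < n then V i ⟨j, hj⟩ else -(V.mulVec e i)) :
    Vp * Vpᵀ = α ^ 2 • (1 : Matrix (Fin n) (Fin n) ℝ) := by
  have dot_self : e ⬝ᵥ e = n := by simp [he, dotProduct]
  exact stmt_9_general
    (dot_self ▸ one_add_mul_mul_two_sub_mul_eq_one (mod_cast hn) (hβ ▸ hγ)) hV hVp
end

section
/- Let n ≥ 1, h > 0, α = √((n+1)/n), β = 1/(n+1), γ = (1/n)(1 ± √β), V = α(I − γ·e·eᵀ) ∈ ℝ^{n×n}, and V₊ = [V, −V·e] ∈ ℝ^{n×(n+1)}. Given scalars f₀, f₁, …, f_{n+1} ∈ ℝ, set f = (f₁, …, fₙ)ᵀ ∈ ℝⁿ, δf₊ = (f₁ − f₀, …, f_{n+1} − f₀)ᵀ ∈ ℝ^{n+1}, c₁ = 1/(hα), and c₂ = c₁·((γn − 1)·f_{n+1} − γ·(eᵀf)). Then the vector g = c₁·f + c₂·e is the unique solution of the normal equations V₊V₊ᵀ·g =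 (1/h)·V₊·δf₊. -/
open Matrix

/-!
The columns of `V₊ = [V, -Ve]` sum to zero, so `V₊` sees only differences of function values:
`V₊ δf₊ = V (f - f_{n+1} e)`, and `f₀` drops out. The parameter `γ` is exactly a root of
`(n + 1) γ (2 - n γ) = 1`, which makes the rank-one part of `V₊ V₊ᵀ = V Vᵀ + (Ve)(Ve)ᵀ` vanish.
Hence `V₊ V₊ᵀ = α² I`, and the normal equations are solved by dividing by `α²`.
-/

section ZeroSumExtension

variable {R m : Type*} [Ring R] {n : ℕ}

/-- The matrix `[A, -A e]`: the column appended to `A` makes every row sum zero. For a matrix of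
`n` vertices of a simplex centred at the origin, it adds the remaining vertex. -/
def zeroSumExtension (A : Matrix m (Fin n) R) : Matrix m (Fin (n + 1)) R :=
  Matrix.of fun i => Fin.snoc (A i) (-(A *ᵥ 1) i)

theorem zeroSumExtension_mulVec_snoc (A : Matrix m (Fin n) R) (v : Fin n → R) (t : R) :
    zeroSumExtension A *ᵥ Fin.snoc v t = A *ᵥ (v - Function.const _ t) := by
  ext i
  simp [zeroSumExtension, mulVec, dotProduct, Fin.sum_univ_castSucc, mul_sub, Finset.sum_mul,
    ← sub_eq_add_neg]

theorem zeroSumExtension_mulVec_const (A : Matrix m (Fin n) R) (t : R) :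
    zeroSumExtension A *ᵥ Function.const _ t = 0 := by
  have const_eq_snoc : Function.const (Fin (n + 1)) t = Fin.snoc (Function.const (Fin n) t) t := by
    ext j
    cases j using Fin.lastCases <;> simp
  rw [const_eq_snoc, zeroSumExtension_mulVec_snoc, sub_self, mulVec_zero]

theorem zeroSumExtension_mul_transpose (A : Matrix m (Fin n) R) :
    zeroSumExtension A * (zeroSumExtension A)ᵀ = A * Aᵀ + vecMulVec (A *ᵥ 1) (A *ᵥ 1) := by
  ext i k
  simp [zeroSumExtension, mul_apply, Fin.sum_univ_castSucc, vecMulVec_apply]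

end ZeroSumExtension

section AlignedSimplex

variable {R : Type*} [CommRing R]

/-- The matrix `V = α (I - γ e eᵀ)`. For suitable `γ` its columns are all but one of the vertices
of a regular simplex centred at the origin, the last vertex being a multiple of the vector `e`. -/
def alignedBasis (ι : Type*) [DecidableEq ι] (α γ : R) : Matrix ι ι R :=
  α • (1 - γ • vecMulVec 1 1)

/-- The matrix `V₊ = [V, -V e]` whose columns are the vertices of the aligned simplex. -/
def alignedSimplex (n : ℕ) (α γ : R) : Matrix (Fin n) (Fin (n + 1)) R :=
  zeroSumExtension (alignedBasis (Fin n) α γ)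

variable {ι : Type*} [Fintype ι] [DecidableEq ι]

theorem alignedBasis_mulVec (α γ : R) (v : ι → R) :
    alignedBasis ι α γ *ᵥ v = α • (v - (γ * ∑ j, v j) • 1) := by
  rw [alignedBasis, smul_mulVec, sub_mulVec, one_mulVec, smul_mulVec, vecMulVec_mulVec,
    one_dotProduct, op_smul_eq_smul, smul_smul]

theorem alignedBasis_mulVec_one (α γ : R) :
    alignedBasis ι α γ *ᵥ 1 = (α * (1 - γ * Fintype.card ι)) • 1 := by
  simp [alignedBasis_mulVec, mul_smul, sub_smul]

theorem alignedBasis_mul_transpose (α γ : R) :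
    alignedBasis ι α γ * (alignedBasis ι α γ)ᵀ =
      α ^ 2 • (1 - (γ * (2 - Fintype.card ι * γ)) • vecMulVec 1 1) := by
  have ones_mul_ones :
      vecMulVec (1 : ι → R) (1 : ι → R) * vecMulVec 1 1 =
        (Fintype.card ι : R) • vecMulVec 1 1 := by
    rw [vecMulVec_mul_vecMulVec, one_dotProduct_one, vecMulVec_smul]
  simp only [alignedBasis, transpose_smul, transpose_sub, transpose_one, transpose_vecMulVec,
    Matrix.smul_mul, Matrix.mul_smul, sub_mul, mul_sub, one_mul, mul_one, ones_mul_ones]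
  module

theorem alignedSimplex_mul_transpose {n : ℕ} {γ : R} (α : R)
    (hγ : (n + 1) * γ * (2 - n * γ) = 1) :
    alignedSimplex n α γ * (alignedSimplex n α γ)ᵀ = α ^ 2 • 1 := by
  have rank_one_coeff : (1 - γ * n) ^ 2 - γ * (2 - n * γ) = 0 := by linear_combination -hγ
  rw [alignedSimplex, zeroSumExtension_mul_transpose, alignedBasis_mul_transpose,
    alignedBasis_mulVec_one, smul_vecMulVec, vecMulVec_smul, Fintype.card_fin]
  linear_combination (norm := module)
    (α ^ 2 * rank_one_coeff) • vecMulVec (1 : Fin n → R) (1 : Fin n → R)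

theorem alignedSimplex_mulVec_snoc_sub_const {n : ℕ} (α γ : R) (f : Fin n → R) (t f₀ : R) :
    alignedSimplex n α γ *ᵥ (Fin.snoc f t - Function.const _ f₀) =
      α • (f + ((γ * n - 1) * t - γ * ∑ j, f j) • 1) := by
  rw [alignedSimplex, mulVec_sub, zeroSumExtension_mulVec_const, sub_zero,
    zeroSumExtension_mulVec_snoc, alignedBasis_mulVec]
  congr 1
  ext i
  simp only [Pi.add_apply, Pi.sub_apply, Pi.smul_apply, Pi.one_apply, Function.const_apply,
    Finset.sum_sub_distrib, Finset.sum_const, Finset.card_univ, Fintype.card_fin, nsmul_eq_mul,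
    smul_eq_mul]
  ring

end AlignedSimplex

theorem alignedSimplex_parameter_quadratic {K : Type*} [Field K] {ν s γ : K} (hν : ν ≠ 0)
    (hs : (ν + 1) * s ^ 2 = 1) (hγ : γ = 1 / ν * (1 - s) ∨ γ = 1 / ν * (1 + s)) :
    (ν + 1) * γ * (2 - ν * γ) = 1 := by
  have one_sub_sq : (1 - ν * γ) ^ 2 = s ^ 2 := by
    rcases hγ with rfl | rfl <;> field_simp <;> ring
  refine mul_left_cancel₀ hν ?_
  linear_combination -(ν + 1) * one_sub_sq - hs

theorem stmt_10_general {K : Type*} [Field K] {n : ℕ} {α γ h : K} (hα : α ≠ 0) (hh : h ≠ 0)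
    (hγ : (n + 1) * γ * (2 - n * γ) = 1) (f : Fin n → K) (fnp1 f₀ : K) (g : Fin n → K) :
    (alignedSimplex n α γ * (alignedSimplex n α γ)ᵀ) *ᵥ g =
        (1 / h) • alignedSimplex n α γ *ᵥ (Fin.snoc f fnp1 - Function.const _ f₀) ↔
      g = (1 / (h * α)) • f + (1 / (h * α) * ((γ * n - 1) * fnp1 - γ * ∑ j, f j)) • 1 := by
  have scale_eq : (α ^ 2)⁻¹ * (1 / h) * α = 1 / (h * α) := by field_simp
  rw [alignedSimplex_mul_transpose α hγ, alignedSimplex_mulVec_snoc_sub_const, smul_mulVec,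
    one_mulVec, ← eq_inv_smul_iff₀ (pow_ne_zero 2 hα), smul_smul, smul_smul, scale_eq, smul_add,
    smul_smul]

/-- The aligned regular simplex gradient `g = c₁ f + c₂ e`, with
`c₁ = 1/(hα)` and `c₂ = c₁((γn − 1) f_{n+1} − γ eᵀf)`, is the unique solution
of the normal equations `V₊V₊ᵀ g = (1/h) V₊ δf₊`. -/
theorem stmt_10 (n : ℕ) (hn : 1 ≤ n)
    (α β γ h : ℝ) (hh : 0 < h)
    (hα : α = Real.sqrt ((n + 1) / n))
    (hβ : β = 1 / (n + 1))
    (hγ : γ = (1 / n) * (1 - Real.sqrt β) ∨ γ = (1 / n) * (1 + Real.sqrt β))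
    (e : Fin n → ℝ) (he : e = fun _ => 1)
    (V : Matrix (Fin n) (Fin n) ℝ)
    (hV : V = α • ((1 : Matrix (Fin n) (Fin n) ℝ) - γ • Matrix.vecMulVec e e))
    (Vp : Matrix (Fin n) (Fin (n + 1)) ℝ)
    (hVp : ∀ (i : Fin n) (j : Fin (n + 1)),
      Vp i j = if hj : (j : ℕ) < n then V i ⟨j, hj⟩ else -(V.mulVec e i))
    (f : Fin n → ℝ) (fnp1 f₀ : ℝ)
    (δ : Fin (n + 1) → ℝ)
    (hδ : ∀ j : Fin (n + 1),
      δ j = (if hj : (j : ℕ) < n then f ⟨j, hj⟩ else fnp1) - f₀)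
    (c₁ c₂ : ℝ)
    (hc₁ : c₁ = 1 / (h * α))
    (hc₂ : c₂ = c₁ * ((γ * n - 1) * fnp1 - γ * (∑ j, f j))) :
    ∀ g : Fin n → ℝ,
      (Vp * Vpᵀ).mulVec g = (1 / h) • Vp.mulVec δ ↔ g = c₁ • f + c₂ • e := by
  have hn_pos : (0 : ℝ) < n := by exact_mod_cast hn
  have hα_ne : α ≠ 0 := by rw [hα]; positivity
  have hβ_sq : (n + 1 : ℝ) * √β ^ 2 = 1 := by
    rw [hβ, Real.sq_sqrt (by positivity)]
    field_simp
  have hγ_root := alignedSimplex_parameter_quadratic hn_pos.ne' hβ_sq hγ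
  subst he hV hc₁ hc₂
  obtain rfl : Vp = alignedSimplex n α γ := Matrix.ext hVp
  obtain rfl : δ = Fin.snoc f fnp1 - Function.const _ f₀ := funext hδ
  exact stmt_10_general hα_ne hh.ne' hγ_root f fnp1 f₀
end

section
/- Let n ≥ 1, α = √((n+1)/n), β = 1/(n+1), γ = (1/n)(1 ± √β), and V = α(I − γ·e·eᵀ) ∈ ℝ^{n×n}. Then V² + V·e·eᵀ·V = α²·I. Consequently, for any h > 0 and scalars f₁, …, f_{n+1} with f = (f₁, …, fₙ)ᵀ, a vector g ∈ ℝⁿ satisfies the square system (V + e·eᵀ·V)·g = (1/h)·(f − f_{n+1}·e) if and only if g = (1/(hα²))·V·(f − f_{n+1}·e). -/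
open Matrix

/-!
Put `J = e eᵀ`, so that `J² = n J`. Sherman–Morrison gives `(I + J)⁻¹ = I - J / (n + 1)`, while
`(I - γ J)² = I - (2 γ - n γ²) J`. The two values of `γ` are exactly the roots of
`2 γ - n γ² = 1 / (n + 1)`, so `I - γ J` is a square root of `(I + J)⁻¹` that commutes with `J`.
Therefore `V (I + J) V = α² I`, which says that `α⁻² V` is the inverse of `V + J V`.
-/

section Algebra

variable {R A : Type*} [CommRing R] [Ring A] [Algebra R A] {c : R} {J : A}

theorem one_sub_smul_mul_self (hJ : J * J = c • J) (γ : R) :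
    (1 - γ • J) * (1 - γ • J) = 1 - (2 * γ - c * γ ^ 2) • J := by
  simp only [mul_sub, sub_mul, mul_one, one_mul, smul_mul_smul_comm, hJ]
  module

theorem one_sub_smul_mul_one_add_eq_one (hJ : J * J = c • J) {s : R} (hs : (c + 1) * s = 1) :
    (1 - s • J) * (1 + J) = 1 := by
  calc (1 - s • J) * (1 + J)
      = 1 + (1 - (c + 1) * s) • J := by
        simp only [mul_add, sub_mul, mul_one, one_mul, smul_mul_assoc, hJ]
        module
    _ = 1 := by rw [hs, sub_self, zero_smul, add_zero]

theorem mul_self_add_mul_mul_self_eq_smul_one (hJ : J * J = c • J) {α γ : R}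
    (hγ : (c + 1) * (2 * γ - c * γ ^ 2) = 1) {V : A} (hV : V = α • (1 - γ • J)) :
    V * V + V * J * V = α ^ 2 • (1 : A) := by
  have hcomm : Commute J (1 - γ • J) :=
    (Commute.one_right J).sub_right ((Commute.refl J).smul_right γ)
  have hcancel : (1 - γ • J) * (1 - γ • J) * (1 + J) = 1 := by
    rw [one_sub_smul_mul_self hJ, one_sub_smul_mul_one_add_eq_one hJ hγ]
  calc V * V + V * J * V
      = α ^ 2 • ((1 - γ • J) * (1 - γ • J) + (1 - γ • J) * (J * (1 - γ • J))) := by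
        simp only [hV, smul_mul_assoc, mul_smul_comm, smul_smul, smul_add, mul_assoc, sq]
    _ = α ^ 2 • ((1 - γ • J) * (1 - γ • J) * (1 + J)) := by
        rw [hcomm.eq, mul_add, mul_one, mul_assoc]
    _ = α ^ 2 • (1 : A) := by rw [hcancel]

end Algebra

section Field

variable {K : Type*} [Field K]

theorem add_one_mul_two_mul_sub_mul_sq_eq_one {x s γ : K} (hx : x ≠ 0)
    (hs : (x + 1) * s ^ 2 = 1) (hγ : γ = 1 / x * (1 - s)) :
    (x + 1) * (2 * γ - x * γ ^ 2) = 1 := by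
  have hxγ : x * γ = 1 - s := by rw [hγ]; field_simp
  apply mul_left_cancel₀ hx
  calc x * ((x + 1) * (2 * γ - x * γ ^ 2))
      = (x + 1) * (1 - (1 - x * γ) ^ 2) := by ring
    _ = x + 1 - (x + 1) * s ^ 2 := by rw [hxγ]; ring
    _ = x * 1 := by rw [hs]; ring

variable {ι : Type*} [Fintype ι] [DecidableEq ι]

theorem mulVec_eq_iff_eq_inv_smul_mulVec {M N : Matrix ι ι K} {a : K} (ha : a ≠ 0)
    (hNM : N * M = a • (1 : Matrix ι ι K)) {x b : ι → K} :
    M *ᵥ x = b ↔ x = a⁻¹ • N *ᵥ b := by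
  have hleft : (a⁻¹ • N) * M = 1 := by rw [smul_mul_assoc, hNM, inv_smul_smul₀ ha]
  have hright : M * (a⁻¹ • N) = 1 := mul_eq_one_comm.mp hleft
  rw [← smul_mulVec]
  constructor
  · rintro rfl
    rw [mulVec_mulVec, hleft, one_mulVec]
  · rintro rfl
    rw [mulVec_mulVec, hright, one_mulVec]

theorem stmt_11_general {J V : Matrix ι ι K} {c α γ : K} (hα : α ≠ 0) (hJ : J * J = c • J)
    (hγ : (c + 1) * (2 * γ - c * γ ^ 2) = 1) (hV : V = α • (1 - γ • J)) :
    V * V + V * J * V = α ^ 2 • (1 : Matrix ι ι K) ∧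
      ∀ (t : K) (b g : ι → K),
        (V + J * V) *ᵥ g = t • b ↔ g = (t / α ^ 2) • V *ᵥ b := by
  have hquad := mul_self_add_mul_mul_self_eq_smul_one hJ hγ hV
  have hinv : V * (V + J * V) = α ^ 2 • (1 : Matrix ι ι K) := by
    rw [mul_add, ← mul_assoc, hquad]
  refine ⟨hquad, fun t b g => ?_⟩
  rw [mulVec_eq_iff_eq_inv_smul_mulVec (pow_ne_zero 2 hα) hinv, mulVec_smul, smul_smul,
    div_eq_inv_mul]

end Field

theorem add_one_mul_two_mul_sub_mul_sq_eq_one_of_sqrt {x β γ : ℝ} (hx : 0 < x)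
    (hβ : β = 1 / (x + 1)) (hγ : γ = 1 / x * (1 - √β) ∨ γ = 1 / x * (1 + √β)) :
    (x + 1) * (2 * γ - x * γ ^ 2) = 1 := by
  have hsq : (x + 1) * √β ^ 2 = 1 := by
    rw [hβ, Real.sq_sqrt (by positivity), mul_one_div_cancel (by positivity)]
  rcases hγ with hminus | hplus
  · exact add_one_mul_two_mul_sub_mul_sq_eq_one hx.ne' hsq hminus
  · exact add_one_mul_two_mul_sub_mul_sq_eq_one (s := -√β) hx.ne' (by rwa [neg_sq])
      (by rwa [sub_neg_eq_add])

/-- `V² + V e eᵀ V = α² I`, and therefore `g` solves the square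
system `(V + e eᵀ V) g = (1/h)(f − f_{n+1} e)` if and only if
`g = (1/(hα²)) V (f − f_{n+1} e)`. -/
theorem stmt_11 (n : ℕ) (hn : 1 ≤ n)
    (α β γ : ℝ)
    (hα : α = Real.sqrt ((n + 1) / n))
    (hβ : β = 1 / (n + 1))
    (hγ : γ = (1 / n) * (1 - Real.sqrt β) ∨ γ = (1 / n) * (1 + Real.sqrt β))
    (e : Fin n → ℝ) (he : e = fun _ => 1)
    (V : Matrix (Fin n) (Fin n) ℝ)
    (hV : V = α • ((1 : Matrix (Fin n) (Fin n) ℝ) - γ • Matrix.vecMulVec e e)) :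
    V * V + V * Matrix.vecMulVec e e * V = α ^ 2 • (1 : Matrix (Fin n) (Fin n) ℝ) ∧
    (∀ (h : ℝ), 0 < h → ∀ (f : Fin n → ℝ) (fnp1 : ℝ) (g : Fin n → ℝ),
      ((V + Matrix.vecMulVec e e * V).mulVec g = (1 / h) • (f - fnp1 • e) ↔
        g = (1 / (h * α ^ 2)) • V.mulVec (f - fnp1 • e))) := by
  have hn0 : (0 : ℝ) < n := by exact_mod_cast hn
  have hα0 : α ≠ 0 := by rw [hα]; positivity
  have hJ : vecMulVec e e * vecMulVec e e = (n : ℝ) • vecMulVec e e := by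
    simp [vecMulVec_mul_vecMulVec, he, dotProduct]
  obtain ⟨hquad, hsolve⟩ := stmt_11_general hα0 hJ
    (add_one_mul_two_mul_sub_mul_sq_eq_one_of_sqrt hn0 hβ hγ) hV
  exact ⟨hquad, fun h _ f fnp1 g => by simpa only [div_div] using hsolve (1 / h) (f - fnp1 • e) g⟩
end

section
/- Let n ≥ 1, α = √((n+1)/n), β = 1/(n+1), γ = (1/n)(1 ± √β), V = α(I − γ·e·eᵀ), and V₊ = [V, −V·e] ∈ ℝ^{n×(n+1)}. Then the spectral (operator 2-) norm of V₊ equals α. -/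
open Matrix

/-!
Since `V₊ = [V, -Ve]`, its Gram matrix is `V₊V₊ᴴ = V(I + eeᴴ)Vᴴ`. All three factors are polynomials
in the rank-one matrix `J = eeᴴ`, which satisfies `J² = sJ` with `s = eᴴe`, and the two values of
`γ` are exactly those for which `(I - γJ)(I + J)(I - γJ)` is the identity: on the range of `J` this
is the scalar equation `(1 - γs)²(1 + s) = 1`. Hence `V₊V₊ᴴ = α²I`, and the C⋆-identity gives the
norm.
-/

open scoped Matrix.Norms.L2Operator

theorem l2_opNorm_eq_norm_of_mul_conjTranspose_self_eq {𝕜 m n : Type*} [RCLike 𝕜] [Fintype m]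
    [Fintype n] [DecidableEq m] [DecidableEq n] [Nonempty m] {A : Matrix m n 𝕜} {c : 𝕜}
    (hA : A * Aᴴ = (c * star c) • 1) : ‖A‖ = ‖c‖ := by
  rw [← mul_self_inj (norm_nonneg _) (norm_nonneg _)]
  calc ‖A‖ * ‖A‖ = ‖A * Aᴴ‖ := by
        rw [← l2_opNorm_conjTranspose, ← l2_opNorm_conjTranspose_mul_self,
          conjTranspose_conjTranspose]
    _ = ‖c‖ * ‖c‖ := by rw [hA, norm_smul, CStarRing.norm_one, mul_one, norm_mul, norm_star]

section AppendNegMulVec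

variable {R m : Type*} [CommRing R] {n : ℕ}

/-- The matrix `V₊ = [V, -Ve]`, obtained from `V` by appending `-Ve` as the last column. -/
def appendNegMulVec (V : Matrix m (Fin n) R) (e : Fin n → R) : Matrix m (Fin (n + 1)) R :=
  of fun i ↦ Fin.snoc (α := fun _ ↦ R) (V i) (-(V *ᵥ e) i)

theorem appendNegMulVec_apply (V : Matrix m (Fin n) R) (e : Fin n → R) (i : m)
    (j : Fin (n + 1)) :
    appendNegMulVec V e i j = if hj : (j : ℕ) < n then V i ⟨j, hj⟩ else -(V *ᵥ e) i := by
  cases j using Fin.lastCases <;> simp [appendNegMulVec]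

theorem appendNegMulVec_mul_conjTranspose_self [StarRing R] (V : Matrix m (Fin n) R)
    (e : Fin n → R) :
    appendNegMulVec V e * (appendNegMulVec V e)ᴴ = V * (1 + vecMulVec e (star e)) * Vᴴ := by
  have hcols : appendNegMulVec V e * (appendNegMulVec V e)ᴴ =
      V * Vᴴ + vecMulVec (V *ᵥ e) (star (V *ᵥ e)) := by
    ext i j
    simp [appendNegMulVec_apply, mul_apply, Fin.sum_univ_castSucc, vecMulVec_apply]
  rw [hcols, star_mulVec, Matrix.mul_add, Matrix.add_mul, Matrix.mul_one, mul_vecMulVec,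
    vecMulVec_mul]

end AppendNegMulVec

theorem one_sub_smul_mul_one_add_mul_one_sub_smul {R A : Type*} [CommRing R] [Ring A]
    [Algebra R A] {a : A} {s : R} (ha : a * a = s • a) (γ δ : R) :
    (1 - γ • a) * (1 + a) * (1 - δ • a) = 1 + (1 - (γ + δ - γ * δ * s) * (1 + s)) • a := by
  simp only [mul_add, add_mul, mul_sub, sub_mul, one_mul, mul_one, smul_mul_assoc,
    mul_smul_comm, ha]
  module

theorem one_sub_smul_vecMulVec_mul_one_add_mul_conjTranspose {𝕜 n : Type*} [RCLike 𝕜] [Fintype n]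
    [DecidableEq n] {γ s : 𝕜} {e : n → 𝕜} (hs : s = star e ⬝ᵥ e)
    (hγ : (1 - γ * s) * star (1 - γ * s) * (1 + s) = 1) :
    (1 - γ • vecMulVec e (star e)) * (1 + vecMulVec e (star e)) *
      (1 - γ • vecMulVec e (star e))ᴴ = 1 := by
  have hsq : vecMulVec e (star e) * vecMulVec e (star e) = s • vecMulVec e (star e) := by
    rw [vecMulVec_mul_vecMulVec, hs, vecMulVec_smul]
  have hstar : star s = s := by rw [hs, ← star_dotProduct]
  have hcoeff : s * (1 - (γ + star γ - γ * star γ * s) * (1 + s)) = 0 := by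
    rw [star_sub, star_one, star_mul, hstar] at hγ
    linear_combination hγ
  have hzero : (1 - (γ + star γ - γ * star γ * s) * (1 + s)) • vecMulVec e (star e) = 0 := by
    rcases mul_eq_zero.mp hcoeff with hs_zero | hcoeff_zero
    · open scoped ComplexOrder in
      have he : e = 0 := dotProduct_star_self_eq_zero.mp (hs.symm.trans hs_zero)
      rw [he, zero_vecMulVec, smul_zero]
    · rw [hcoeff_zero, zero_smul]
  rw [conjTranspose_sub, conjTranspose_one, conjTranspose_smul, conjTranspose_vecMulVec,
    star_star, one_sub_smul_mul_one_add_mul_one_sub_smul hsq, hzero, add_zero]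

theorem one_sub_mul_mul_self_mul_one_add {s β γ : ℝ} (hs : 0 < s) (hβ : β = 1 / (s + 1))
    (hγ : γ = (1 / s) * (1 - √β) ∨ γ = (1 / s) * (1 + √β)) :
    (1 - γ * s) * (1 - γ * s) * (1 + s) = 1 := by
  have hβ_nonneg : 0 ≤ β := by rw [hβ]; positivity
  have hsq : (1 - γ * s) * (1 - γ * s) = β := by
    rw [← Real.mul_self_sqrt hβ_nonneg, mul_self_eq_mul_self_iff]
    rcases hγ with rfl | rfl
    · left; field_simp; ring
    · right; field_simp; ring
  rw [hsq, hβ]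
  field_simp
  ring

theorem stmt_15_general {𝕜 : Type*} [RCLike 𝕜] {n : ℕ} (hn : 1 ≤ n) {α γ s : 𝕜} {e : Fin n → 𝕜}
    (hs : s = star e ⬝ᵥ e) (hγ : (1 - γ * s) * star (1 - γ * s) * (1 + s) = 1)
    {V : Matrix (Fin n) (Fin n) 𝕜} (hV : V = α • (1 - γ • vecMulVec e (star e))) :
    ‖appendNegMulVec V e‖ = ‖α‖ := by
  have : Nonempty (Fin n) := ⟨⟨0, hn⟩⟩
  apply l2_opNorm_eq_norm_of_mul_conjTranspose_self_eq
  rw [appendNegMulVec_mul_conjTranspose_self, hV, conjTranspose_smul, smul_mul, smul_mul,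
    Matrix.mul_smul, one_sub_smul_vecMulVec_mul_one_add_mul_conjTranspose hs hγ, smul_smul]

/-- The spectral (operator 2-) norm of `V₊ = [V, −Ve]`, viewed as
a linear map from Euclidean ℝ^{n+1} to Euclidean ℝⁿ, equals `α`. -/
theorem stmt_15 (n : ℕ) (hn : 1 ≤ n)
    (α β γ : ℝ)
    (hα : α = Real.sqrt ((n + 1) / n))
    (hβ : β = 1 / (n + 1))
    (hγ : γ = (1 / n) * (1 - Real.sqrt β) ∨ γ = (1 / n) * (1 + Real.sqrt β))
    (e : Fin n → ℝ) (he : e = fun _ => 1)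
    (V : Matrix (Fin n) (Fin n) ℝ)
    (hV : V = α • ((1 : Matrix (Fin n) (Fin n) ℝ) - γ • Matrix.vecMulVec e e))
    (Vp : Matrix (Fin n) (Fin (n + 1)) ℝ)
    (hVp : ∀ (i : Fin n) (j : Fin (n + 1)),
      Vp i j = if hj : (j : ℕ) < n then V i ⟨j, hj⟩ else -(V.mulVec e i)) :
    ‖LinearMap.toContinuousLinearMap (Matrix.toEuclideanLin Vp)‖ = α := by
  obtain rfl : Vp = appendNegMulVec V e := by ext i j; rw [hVp, appendNegMulVec_apply]
  have hγ' := one_sub_mul_mul_self_mul_one_add (Nat.cast_pos.mpr hn) hβ hγ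
  exact (stmt_15_general hn (by simp [he, dotProduct]) hγ' hV).trans
    (Real.norm_of_nonneg (hα ▸ Real.sqrt_nonneg _))
end

section
/- Let n ≥ 1, α = √((n+1)/n), γ = (1/n)(1 ± 1/√(n+1)), V = α(I − γ·e·eᵀ) ∈ ℝ^{n×n}, and let Q ∈ ℝ^{n×n} be an orthogonal matrix. Set Y = Q·V. Then Y·Yᵀ = α²·I − Y·e·eᵀ·Yᵀ. -/
open Matrix

/-!
Put `M = I − γ u uᵀ` and `s = u ⬝ u`. Since `(u uᵀ)² = s u uᵀ`, the matrix `M` squares to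
`I − γ (2 − γ s) u uᵀ`, which is the inverse of `I + u uᵀ` as soon as `γ (2 − γ s) (1 + s) = 1`
(Sherman–Morrison). Hence `M (I + u uᵀ) M = I`, and conjugating by `α Q` gives
`Y (I + u uᵀ) Yᵀ = α² I` for `Y = α Q M`.
-/

section Algebra

variable {R A : Type*} [CommRing R] [Ring A] [Algebra R A]

theorem one_sub_smul_mul_one_sub_smul_of_mul_self_eq_smul {a : A} {s : R}
    (ha : a * a = s • a) (γ : R) :
    (1 - γ • a) * (1 - γ • a) = 1 - (γ * (2 - γ * s)) • a := by
  simp only [mul_sub, sub_mul, mul_one, one_mul, smul_mul_smul_comm, ha]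
  module

theorem one_sub_smul_mul_one_add_of_mul_self_eq_smul {a : A} {s : R}
    (ha : a * a = s • a) {c : R} (hc : c * (1 + s) = 1) :
    (1 - c • a) * (1 + a) = 1 := by
  have expand : (1 - c • a) * (1 + a) = 1 + (1 - c * (1 + s)) • a := by
    simp only [sub_mul, mul_add, mul_one, one_mul, smul_mul_assoc, ha]
    module
  rw [expand, hc, sub_self, zero_smul, add_zero]

theorem one_sub_smul_mul_one_add_mul_one_sub_smul_of_mul_self_eq_smul {a : A} {s γ : R}
    (ha : a * a = s • a) (hγ : γ * (2 - γ * s) * (1 + s) = 1) :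
    (1 - γ • a) * (1 + a) * (1 - γ • a) = 1 := by
  have comm : Commute (1 + a) (1 - γ • a) :=
    (Commute.one_left _).add_left <|
      (Commute.one_right a).sub_right ((Commute.refl a).smul_right γ)
  rw [mul_assoc, comm.eq, ← mul_assoc, one_sub_smul_mul_one_sub_smul_of_mul_self_eq_smul ha,
    one_sub_smul_mul_one_add_of_mul_self_eq_smul ha hγ]

end Algebra

theorem mul_two_sub_mul_mul_one_add_eq_one_of_sq_eq {K : Type*} [Field K] {s r γ : K}
    (hs : s ≠ 0) (hr : r ≠ 0) (hsq : r ^ 2 = 1 + s) (hγ : γ = 1 / s * (1 - 1 / r)) :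
    γ * (2 - γ * s) * (1 + s) = 1 := by
  have hγs : γ * s = 1 - 1 / r := by rw [hγ]; field_simp
  calc γ * (2 - γ * s) * (1 + s) = 1 / s * (1 - 1 / r) * (1 + 1 / r) * r ^ 2 := by
        rw [hγs, hγ, hsq]; ring
    _ = 1 / s * (r ^ 2 - 1) := by field_simp; ring
    _ = 1 := by rw [hsq]; field_simp; ring

theorem mul_two_sub_mul_mul_one_add_eq_one_of_sqrt {s γ : ℝ} (hs : s ≠ 0) (hs1 : 0 < s + 1)
    (hγ : γ = 1 / s * (1 - 1 / √(s + 1)) ∨ γ = 1 / s * (1 + 1 / √(s + 1))) :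
    γ * (2 - γ * s) * (1 + s) = 1 := by
  have hsqrt : √(s + 1) ≠ 0 := (Real.sqrt_pos.2 hs1).ne'
  have hsq : √(s + 1) ^ 2 = 1 + s := by rw [Real.sq_sqrt hs1.le, add_comm]
  rcases hγ with hγ | hγ
  · exact mul_two_sub_mul_mul_one_add_eq_one_of_sq_eq hs hsqrt hsq hγ
  · refine mul_two_sub_mul_mul_one_add_eq_one_of_sq_eq hs (neg_ne_zero.2 hsqrt) ?_ ?_
    · rw [neg_sq, hsq]
    · rw [hγ, one_div_neg_eq_neg_one_div, sub_neg_eq_add]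

theorem stmt_17_general {R m n : Type*} [CommRing R] [Fintype n] [DecidableEq m] [DecidableEq n]
    {α γ : R} {u : n → R} (hγ : γ * (2 - γ * (u ⬝ᵥ u)) * (1 + u ⬝ᵥ u) = 1)
    {Q : Matrix m n R} (hQ : Q * Qᵀ = 1)
    {Y : Matrix m n R} (hY : Y = Q * (α • (1 - γ • vecMulVec u u))) :
    Y * Yᵀ = α ^ 2 • (1 : Matrix m m R) - Y * vecMulVec u u * Yᵀ := by
  set J := vecMulVec u u
  set M := 1 - γ • J with hM
  have hMt : Mᵀ = M := by
    rw [hM, transpose_sub, transpose_one, transpose_smul, transpose_vecMulVec]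
  have hJJ : J * J = (u ⬝ᵥ u) • J := by rw [vecMulVec_mul_vecMulVec, vecMulVec_smul]
  have hMJM : M * (1 + J) * M = 1 :=
    one_sub_smul_mul_one_add_mul_one_sub_smul_of_mul_self_eq_smul hJJ hγ
  rw [eq_sub_iff_add_eq]
  calc Y * Yᵀ + Y * J * Yᵀ = Y * (1 + J) * Yᵀ := by
        rw [Matrix.mul_add, Matrix.mul_one, Matrix.add_mul]
    _ = α ^ 2 • (Q * (M * (1 + J) * M) * Qᵀ) := by
        simp only [hY, transpose_mul, transpose_smul, hMt, Matrix.mul_smul, Matrix.smul_mul,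
          smul_smul, Matrix.mul_assoc, sq]
    _ = α ^ 2 • 1 := by rw [hMJM, Matrix.mul_one, hQ]

/-- If `Q` is orthogonal and `Y = QV` with `V = α(I − γ e eᵀ)`,
then `Y Yᵀ = α² I − Y e eᵀ Yᵀ`. -/
theorem stmt_17 (n : ℕ) (hn : 1 ≤ n)
    (α γ : ℝ)
    (hα : α = Real.sqrt ((n + 1) / n))
    (hγ : γ = (1 / n) * (1 - 1 / Real.sqrt (n + 1)) ∨
          γ = (1 / n) * (1 + 1 / Real.sqrt (n + 1)))
    (e : Fin n → ℝ) (he : e = fun _ => 1)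
    (V : Matrix (Fin n) (Fin n) ℝ)
    (hV : V = α • ((1 : Matrix (Fin n) (Fin n) ℝ) - γ • Matrix.vecMulVec e e))
    (Q : Matrix (Fin n) (Fin n) ℝ) (hQ : Qᵀ * Q = 1)
    (Y : Matrix (Fin n) (Fin n) ℝ) (hY : Y = Q * V) :
    Y * Yᵀ = α ^ 2 • (1 : Matrix (Fin n) (Fin n) ℝ) - Y * Matrix.vecMulVec e e * Yᵀ := by
  have hee : e ⬝ᵥ e = n := by simp [he, dotProduct]
  have hn0 : (n : ℝ) ≠ 0 := Nat.cast_ne_zero.2 (Nat.one_le_iff_ne_zero.1 hn)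
  exact stmt_17_general
    (hee ▸ mul_two_sub_mul_mul_one_add_eq_one_of_sqrt hn0 n.cast_add_one_pos hγ)
    (mul_eq_one_comm.1 hQ) (hV ▸ hY)
end
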